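/- There exists an absolute constant C > 0 such that for every θ ∈ (0,1) and every positive integer n, ∫_{A} G(s,t,u,v) ds dt du dv ≤ C · n^{2-θ} θ^{-2} (1-θ)^{-2}, and there exists an absolute constant c > 0 such that this integral is ≥ c · n^{2-θ} θ^{-2} (1-θ)^{-2} whenever additionally n^{1-θ} ≥ 8; here A = { (s,t,u,v) ∈ (0,∞)⁴ : 0 < u < 1, 1 ≤ v < n^{1/2}, s ≥ n^{1/4} u^{1/2}, t ≥ n^{1/4} v^{-1/2} }. -/

import Mathlib

open MeasureTheory Set Real

/-- The integrand `G(s,t,u,v)` from the paper's computation of the completely 1-summing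
norm of the identity `OH_n → ℓ^n_p`, with `θ = 2/p'`. Here `p = (s, t, u, v)`. -/
noncomputable def G (θ : ℝ) (n : ℕ) (p : ℝ × ℝ × ℝ × ℝ) : ℝ :=
  (n : ℝ) ^ (2 : ℕ) * p.1 ^ (-1 - 2 * θ) * p.2.1 ^ (-1 - 2 * θ) *
    min (min (min ((n : ℝ)⁻¹ * p.1 ^ (4 : ℝ) * p.2.2.1 ^ (-2 : ℝ) * p.2.2.2 ^ (-2 : ℝ))
                  ((n : ℝ)⁻¹ * p.2.1 ^ (4 : ℝ)))
             (min (p.1 ^ (4 : ℝ) * p.2.2.1 ^ (-2 : ℝ)) (p.2.1 ^ (4 : ℝ) * p.2.2.2 ^ (-2 : ℝ))))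
        (min (min (p.2.2.1 ^ (-2 : ℝ) * p.2.2.2 ^ (-2 : ℝ)) (p.2.2.1 ^ (-2 : ℝ)))
             (min 1 (p.2.2.2 ^ (-2 : ℝ))))

/-- The region of integration. -/
def A (n : ℕ) : Set (ℝ × ℝ × ℝ × ℝ) :=
  {p | 0 < p.1 ∧ 0 < p.2.1 ∧ 0 < p.2.2.1 ∧ 0 < p.2.2.2 ∧ p.2.2.1 < 1 ∧ 1 ≤ p.2.2.2 ∧ p.2.2.2 < (n : ℝ) ^ ((1:ℝ)/2) ∧ (n : ℝ) ^ ((1:ℝ)/4) * p.2.2.1 ^ ((1:ℝ)/2) ≤ p.1 ∧ (n : ℝ) ^ ((1:ℝ)/4) * p.2.2.2 ^ (-(1/2) : ℝ) ≤ p.2.1}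

/-!
On `A n` the minimum in `G` is `v ^ (-2)`, so the integrand is a product of powers, while the
conditions on `(s, u)` and on `(t, v)` are independent of each other. The integral is therefore
`n ^ 2` times a product of two planar integrals over the part of an epigraph `c * y ^ a ≤ x` lying
above an interval. Integrating out `x` leaves `∫₀¹ u ^ (-θ)` and `∫₁^√n v ^ (θ - 2)`, which gives
the exact value `n ^ (2 - θ) * (1 - n ^ (-(1 - θ) / 2)) / (4 * θ ^ 2 * (1 - θ) ^ 2)`.
-/

section Tonelli

variable {α β : Type*} [MeasurableSpace α] [MeasurableSpace β] {μ : Measure α} {ν : Measure β}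
  [SFinite μ] [SFinite ν]

theorem integral_prod_symm_of_nonneg {f : α × β → ℝ} (hf : AEStronglyMeasurable f (μ.prod ν))
    (hf_nonneg : ∀ᵐ y ∂ν, 0 ≤ᵐ[μ] fun x ↦ f (x, y))
    (hf_int : ∀ᵐ y ∂ν, Integrable (fun x ↦ f (x, y)) μ) :
    ∫ z, f z ∂μ.prod ν = ∫ y, ∫ x, f (x, y) ∂μ ∂ν := by
  by_cases h : Integrable f (μ.prod ν)
  · exact integral_prod_symm f h
  -- Otherwise both sides are `0` by the convention for non-integrable functions.
  have norm_eq : (fun y ↦ ∫ x, ‖f (x, y)‖ ∂μ) =ᵐ[ν] fun y ↦ ∫ x, f (x, y) ∂μ := by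
    filter_upwards [hf_nonneg] with y hy
    refine integral_congr_ae ?_
    filter_upwards [hy] with x hx using norm_of_nonneg hx
  have not_integrable : ¬ Integrable (fun y ↦ ∫ x, f (x, y) ∂μ) ν := fun hy ↦
    h ((integrable_prod_iff' hf).2 ⟨hf_int, hy.congr norm_eq.symm⟩)
  rw [integral_undef h, integral_undef not_integrable]

end Tonelli

section Unshuffle

variable {α β γ δ : Type*} [MeasurableSpace α] [MeasurableSpace β] [MeasurableSpace γ]
  [MeasurableSpace δ]

/-- The rearrangement `(s, t, u, v) ↦ ((s, u), (t, v))`, as a measurable equivalence. It separates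
the coordinates of `A n` into two independent pairs. -/
def prodUnshuffle : α × β × γ × δ ≃ᵐ (α × γ) × β × δ where
  toEquiv := (Equiv.prodAssoc α β (γ × δ)).symm.trans (Equiv.prodProdProdComm α β γ δ)
  measurable_toFun := by
    change Measurable fun p : α × β × γ × δ ↦ ((p.1, p.2.2.1), p.2.1, p.2.2.2)
    fun_prop
  measurable_invFun := by
    change Measurable fun q : (α × γ) × β × δ ↦ (q.1.1, q.2.1, q.1.2, q.2.2)
    fun_prop

theorem measurePreserving_prodUnshuffle (μ : Measure α) (ν : Measure β) (ρ : Measure γ)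
    (τ : Measure δ) [SFinite μ] [SFinite ν] [SFinite ρ] [SFinite τ] :
    MeasurePreserving prodUnshuffle (μ.prod (ν.prod (ρ.prod τ)))
      ((μ.prod ρ).prod (ν.prod τ)) := by
  have swap_middle : MeasurePreserving (fun q : β × γ × δ ↦ (q.2.1, q.1, q.2.2))
      (ν.prod (ρ.prod τ)) (ρ.prod (ν.prod τ)) :=
    (measurePreserving_prodAssoc ρ ν τ).comp <|
      (Measure.measurePreserving_swap.prod (MeasurePreserving.id τ)).comp
        (measurePreserving_prodAssoc ν ρ τ).symm
  exact (measurePreserving_prodAssoc μ ρ (ν.prod τ)).symm.comp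
    ((MeasurePreserving.id μ).prod swap_middle)

end Unshuffle

section Epigraph

variable {α β : Type*}

/-- The part lying over `S` of the epigraph of `φ`. The base coordinate comes second, to match the
pairs `(s, u)` and `(t, v)`. -/
def epigraphOver [LE α] (S : Set β) (φ : β → α) : Set (α × β) :=
  {p | p.2 ∈ S ∧ φ p.2 ≤ p.1}

theorem indicator_epigraphOver_mul {M : Type*} [MulZeroClass M] [Preorder α] {S : Set β} {φ : β → α}
    {f : α → M} {g : β → M} (x : α) (y : β) :
    (epigraphOver S φ).indicator (fun p ↦ f p.1 * g p.2) (x, y) =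
      (Ici (φ y)).indicator f x * S.indicator g y := by
  by_cases hy : y ∈ S <;> by_cases hx : φ y ≤ x <;> simp [epigraphOver, indicator, hx, hy]

variable [PartialOrder α] [TopologicalSpace α] [OrderClosedTopology α] [SecondCountableTopology α]
  [MeasurableSpace α] [OpensMeasurableSpace α] [MeasurableSpace β]
  {S : Set β} {φ : β → α} {f : α → ℝ} {g : β → ℝ}

theorem measurableSet_epigraphOver (hS : MeasurableSet S) (hφ : Measurable φ) :
    MeasurableSet (epigraphOver S φ) :=
  (measurable_snd hS).inter (measurableSet_le (hφ.comp measurable_snd) measurable_fst)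

theorem setIntegral_epigraphOver_mul {μ : Measure α} {ν : Measure β} [SFinite μ] [SFinite ν]
    (hS : MeasurableSet S) (hφ : Measurable φ) (hf : Measurable f) (hg : Measurable g)
    (hf_nonneg : ∀ y ∈ S, ∀ x ∈ Ici (φ y), 0 ≤ f x) (hg_nonneg : ∀ y ∈ S, 0 ≤ g y)
    (hf_int : ∀ y ∈ S, IntegrableOn f (Ici (φ y)) μ) :
    ∫ p in epigraphOver S φ, f p.1 * g p.2 ∂μ.prod ν =
      ∫ y in S, (∫ x in Ici (φ y), f x ∂μ) * g y ∂ν := by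
  have hE := measurableSet_epigraphOver hS hφ
  have hfg : Measurable fun p : α × β ↦ f p.1 * g p.2 := by fun_prop
  rw [← integral_indicator hE, integral_prod_symm_of_nonneg (hfg.indicator hE).aestronglyMeasurable,
    ← integral_indicator hS]
  · refine integral_congr_ae (ae_of_all _ fun y ↦ ?_)
    simp only [indicator_epigraphOver_mul]
    rw [integral_mul_const, integral_indicator measurableSet_Ici, indicator_mul_right]
  · refine ae_of_all _ fun y ↦ ae_of_all _ fun x ↦ indicator_nonneg (fun p hp ↦ ?_) _
    exact mul_nonneg (hf_nonneg _ hp.1 _ hp.2) (hg_nonneg _ hp.1)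
  · refine ae_of_all _ fun y ↦ ?_
    simp only [indicator_epigraphOver_mul]
    by_cases hy : y ∈ S
    · exact ((hf_int y hy).integrable_indicator measurableSet_Ici).mul_const _
    · simp [hy]

end Epigraph

section PowerIntegrals

theorem integral_Ici_rpow_neg_one_sub {a r : ℝ} (ha : 0 < a) (hr : 0 < r) :
    ∫ x in Ici a, x ^ (-1 - r) = a ^ (-r) / r := by
  rw [integral_Ici_eq_integral_Ioi, integral_Ioi_rpow_of_lt (by linarith) ha,
    show -1 - r + 1 = -r by ring, neg_div_neg_eq]

theorem setIntegral_epigraphOver_rpow {S : Set ℝ} (hS : MeasurableSet S) (hS_pos : S ⊆ Ioi 0)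
    {c r : ℝ} (hc : 0 < c) (hr : 0 < r) (a b : ℝ) :
    ∫ p in epigraphOver S (fun y ↦ c * y ^ a), p.1 ^ (-1 - r) * p.2 ^ b =
      c ^ (-r) / r * ∫ y in S, y ^ (b - a * r) := by
  have height_pos : ∀ y ∈ S, 0 < c * y ^ a := fun y hy ↦ mul_pos hc (rpow_pos_of_pos (hS_pos hy) a)
  have integrable_power : ∀ y ∈ S, IntegrableOn (· ^ (-1 - r)) (Ici (c * y ^ a)) := fun y hy ↦
    integrableOn_Ici_iff_integrableOn_Ioi (by simp) |>.2
      (integrableOn_Ioi_rpow_of_lt (by linarith) (height_pos y hy))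
  rw [Measure.volume_eq_prod, setIntegral_epigraphOver_mul (f := (· ^ (-1 - r))) (g := (· ^ b)) hS
    (by fun_prop) (by fun_prop) (by fun_prop)
    (fun y hy x hx ↦ rpow_nonneg ((height_pos y hy).le.trans hx) _)
    (fun y hy ↦ rpow_nonneg (hS_pos hy).le b) integrable_power, ← integral_const_mul]
  refine setIntegral_congr_fun hS fun y hy ↦ ?_
  have hy_pos : 0 < y := hS_pos hy
  calc (∫ x in Ici (c * y ^ a), x ^ (-1 - r)) * y ^ b
      = (c * y ^ a) ^ (-r) / r * y ^ b := by
        rw [integral_Ici_rpow_neg_one_sub (height_pos y hy) hr]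
    _ = c ^ (-r) / r * (y ^ b * y ^ (-(a * r))) := by
        rw [mul_rpow hc.le (by positivity), ← rpow_mul hy_pos.le, mul_neg]
        ring
    _ = c ^ (-r) / r * y ^ (b - a * r) := by rw [← rpow_add hy_pos, ← sub_eq_add_neg]

theorem integral_Ioo_zero_one_rpow {r : ℝ} (hr : -1 < r) :
    ∫ x in Ioo (0 : ℝ) 1, x ^ r = 1 / (r + 1) := by
  rw [← integral_Ioc_eq_integral_Ioo, ← intervalIntegral.integral_of_le zero_le_one,
    integral_rpow (.inl hr), one_rpow, zero_rpow (by linarith), sub_zero]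

theorem integral_Ico_rpow {a b r : ℝ} (ha : 0 < a) (hab : a ≤ b) (hr : r ≠ -1) :
    ∫ x in Ico a b, x ^ r = (b ^ (r + 1) - a ^ (r + 1)) / (r + 1) := by
  rw [integral_Ico_eq_integral_Ioo, ← integral_Ioc_eq_integral_Ioo,
    ← intervalIntegral.integral_of_le hab,
    integral_rpow (.inr ⟨hr, notMem_uIcc_of_lt ha (ha.trans_le hab)⟩)]

end PowerIntegrals

section Region

theorem mul_rpow_le_rpow_of_rpow_one_div_mul_le {c x y a k : ℝ} (hc : 0 ≤ c) (hy : 0 ≤ y)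
    (hk : 0 < k) (h : c ^ (1 / k) * y ^ a ≤ x) : c * y ^ (a * k) ≤ x ^ k := by
  calc c * y ^ (a * k) = (c ^ (1 / k) * y ^ a) ^ k := by
        rw [one_div, mul_rpow (by positivity) (by positivity), rpow_inv_rpow hc hk.ne',
          ← rpow_mul hy]
    _ ≤ x ^ k := rpow_le_rpow (by positivity) h hk.le

variable {θ : ℝ} {n : ℕ} {p : ℝ × ℝ × ℝ × ℝ}

theorem le_rpow_mul_rpow_of_mem_A (hp : p ∈ A n) :
    (n : ℝ) ≤ p.1 ^ (4 : ℝ) * p.2.2.1 ^ (-2 : ℝ) := by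
  obtain ⟨-, -, hu, -, -, -, -, hsu, -⟩ := hp
  have hs := mul_rpow_le_rpow_of_rpow_one_div_mul_le n.cast_nonneg hu.le four_pos hsu
  calc (n : ℝ) = n * p.2.2.1 ^ ((1 : ℝ) / 2 * 4) * p.2.2.1 ^ (-2 : ℝ) := by
        rw [mul_assoc, ← rpow_add hu]
        norm_num
    _ ≤ _ := by gcongr

theorem mul_rpow_le_rpow_of_mem_A (hp : p ∈ A n) :
    n * p.2.2.2 ^ (-2 : ℝ) ≤ p.2.1 ^ (4 : ℝ) := by
  obtain ⟨-, -, -, hv, -, -, -, -, htv⟩ := hp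
  have ht := mul_rpow_le_rpow_of_rpow_one_div_mul_le n.cast_nonneg hv.le four_pos htv
  rwa [show -(1 / 2) * 4 = (-2 : ℝ) by norm_num] at ht

theorem one_le_mul_rpow_of_mem_A (hn : 0 < n) (hp : p ∈ A n) : 1 ≤ n * p.2.2.2 ^ (-2 : ℝ) := by
  obtain ⟨-, -, -, hv, -, -, hv_lt, -, -⟩ := hp
  have hn' : (0 : ℝ) < n := Nat.cast_pos.2 hn
  calc (1 : ℝ) = n * ((n : ℝ) ^ ((1 : ℝ) / 2)) ^ (-2 : ℝ) := by
        rw [← rpow_mul hn'.le, show (1 : ℝ) / 2 * -2 = -1 by norm_num, rpow_neg_one,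
          mul_inv_cancel₀ hn'.ne']
    _ ≤ n * p.2.2.2 ^ (-2 : ℝ) := by
        gcongr ?_ * ?_
        exact rpow_le_rpow_of_nonpos hv hv_lt.le (by norm_num)

theorem G_eq_of_mem_A (hn : 0 < n) (hp : p ∈ A n) :
    G θ n p = n ^ 2 * p.1 ^ (-1 - 2 * θ) * p.2.1 ^ (-1 - 2 * θ) * p.2.2.2 ^ (-2 : ℝ) := by
  have hS := le_rpow_mul_rpow_of_mem_A hp
  have hT := mul_rpow_le_rpow_of_mem_A hp
  have hnV := one_le_mul_rpow_of_mem_A hn hp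
  obtain ⟨-, -, hu, hv, hu_lt, hv_ge, -⟩ := hp
  have hU : 1 ≤ p.2.2.1 ^ (-2 : ℝ) :=
    one_le_rpow_of_pos_of_le_one_of_nonpos hu hu_lt.le (by norm_num)
  have hV : p.2.2.2 ^ (-2 : ℝ) ≤ 1 := rpow_le_one_of_one_le_of_nonpos hv_ge (by norm_num)
  have hV_pos : 0 < p.2.2.2 ^ (-2 : ℝ) := rpow_pos_of_pos hv _
  have hn' : (1 : ℝ) ≤ n := Nat.one_le_cast.2 hn
  unfold G
  congr 1
  generalize p.1 ^ (4 : ℝ) = S, p.2.1 ^ (4 : ℝ) = T, p.2.2.1 ^ (-2 : ℝ) = U,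
    p.2.2.2 ^ (-2 : ℝ) = V at *
  have hSUV : V ≤ (n : ℝ)⁻¹ * S * U * V := by
    refine le_mul_of_one_le_left hV_pos.le ?_
    rwa [mul_assoc, le_inv_mul_iff₀ (by positivity), mul_one]
  have hnT : V ≤ (n : ℝ)⁻¹ * T := (le_inv_mul_iff₀ (by positivity)).2 hT
  have hTV : V ≤ T * V := le_mul_of_one_le_left hV_pos.le (hnV.trans hT)
  have hUV : V ≤ U * V := le_mul_of_one_le_left hV_pos.le hU
  refine le_antisymm ?_ ?_
  · exact (min_le_right _ _).trans ((min_le_right _ _).trans (min_le_right _ _))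
  · simp only [le_min_iff]
    exact ⟨⟨⟨hSUV, hnT⟩, by linarith, hTV⟩, ⟨hUV, hV.trans hU⟩, hV, le_rfl⟩

theorem A_eq_preimage_prodUnshuffle (hn : 0 < n) :
    A n = prodUnshuffle ⁻¹'
      (epigraphOver (Ioo 0 1) (fun u ↦ (n : ℝ) ^ ((1 : ℝ) / 4) * u ^ ((1 : ℝ) / 2)) ×ˢ
        epigraphOver (Ico 1 ((n : ℝ) ^ ((1 : ℝ) / 2)))
          (fun v ↦ (n : ℝ) ^ ((1 : ℝ) / 4) * v ^ (-(1 / 2) : ℝ))) := by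
  have hn' : (0 : ℝ) < n := Nat.cast_pos.2 hn
  ext ⟨s, t, u, v⟩
  constructor
  · rintro ⟨-, -, hu, -, hu_lt, hv_ge, hv_lt, hsu, htv⟩
    exact ⟨⟨⟨hu, hu_lt⟩, hsu⟩, ⟨hv_ge, hv_lt⟩, htv⟩
  · rintro ⟨⟨⟨hu, hu_lt⟩, hsu⟩, ⟨hv_ge, hv_lt⟩, htv⟩
    have hv : 0 < v := zero_lt_one.trans_le hv_ge
    exact ⟨lt_of_lt_of_le (mul_pos (rpow_pos_of_pos hn' _) (rpow_pos_of_pos hu _)) hsu,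
      lt_of_lt_of_le (mul_pos (rpow_pos_of_pos hn' _) (rpow_pos_of_pos hv _)) htv,
      hu, hv, hu_lt, hv_ge, hv_lt, hsu, htv⟩

theorem setIntegral_A_G_eq_mul (hn : 0 < n) :
    ∫ p in A n, G θ n p = n ^ 2 *
      ((∫ q in epigraphOver (Ioo 0 1) (fun u ↦ (n : ℝ) ^ ((1 : ℝ) / 4) * u ^ ((1 : ℝ) / 2)),
          q.1 ^ (-1 - 2 * θ) * q.2 ^ (0 : ℝ)) *
        ∫ q in epigraphOver (Ico 1 ((n : ℝ) ^ ((1 : ℝ) / 2)))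
            (fun v ↦ (n : ℝ) ^ ((1 : ℝ) / 4) * v ^ (-(1 / 2) : ℝ)),
          q.1 ^ (-1 - 2 * θ) * q.2 ^ (-2 : ℝ)) := by
  have hE (S : Set ℝ) (hS : MeasurableSet S) (a : ℝ) :
      MeasurableSet (epigraphOver S fun y ↦ (n : ℝ) ^ ((1 : ℝ) / 4) * y ^ a) :=
    measurableSet_epigraphOver hS (by fun_prop)
  have hA : MeasurableSet (A n) := by
    rw [A_eq_preimage_prodUnshuffle hn]
    exact prodUnshuffle.measurable ((hE _ measurableSet_Ioo _).prod (hE _ measurableSet_Ico _))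
  have integrand_split : ∀ p ∈ A n, G θ n p = n ^ 2 *
      (((prodUnshuffle p).1.1 ^ (-1 - 2 * θ) * (prodUnshuffle p).1.2 ^ (0 : ℝ)) *
        ((prodUnshuffle p).2.1 ^ (-1 - 2 * θ) * (prodUnshuffle p).2.2 ^ (-2 : ℝ))) := by
    intro p hp
    rw [G_eq_of_mem_A hn hp, rpow_zero]
    change _ = (n : ℝ) ^ 2 * (p.1 ^ (-1 - 2 * θ) * 1 *
      (p.2.1 ^ (-1 - 2 * θ) * p.2.2.2 ^ (-2 : ℝ)))
    ring
  rw [setIntegral_congr_fun hA integrand_split, integral_const_mul,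
    A_eq_preimage_prodUnshuffle hn, ← setIntegral_prod_mul, ← Measure.volume_eq_prod]
  congr 1
  exact (measurePreserving_prodUnshuffle volume volume volume volume).setIntegral_preimage_emb
    prodUnshuffle.measurableEmbedding
    (fun q ↦ (q.1.1 ^ (-1 - 2 * θ) * q.1.2 ^ (0 : ℝ)) * (q.2.1 ^ (-1 - 2 * θ) * q.2.2 ^ (-2 : ℝ))) _

theorem setIntegral_A_G (hθ : 0 < θ) (hθ' : θ < 1) (hn : 0 < n) :
    ∫ p in A n, G θ n p = (1 - ((n : ℝ) ^ (1 - θ)) ^ (-(1 / 2) : ℝ)) / 4 *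
      (n ^ (2 - θ) * θ ^ (-2 : ℝ) * (1 - θ) ^ (-2 : ℝ)) := by
  have hn' : (1 : ℝ) ≤ n := Nat.one_le_cast.2 hn
  have hn_pos : (0 : ℝ) < n := zero_lt_one.trans_le hn'
  have hN : 0 < (n : ℝ) ^ ((1 : ℝ) / 4) := rpow_pos_of_pos hn_pos _
  have hθ_sub : 0 < 1 - θ := sub_pos.2 hθ'
  have u_integral : ∫ u in Ioo (0 : ℝ) 1, u ^ (0 - 1 / 2 * (2 * θ)) = 1 / (1 - θ) := by
    rw [integral_Ioo_zero_one_rpow (by linarith)]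
    ring_nf
  have v_integral : ∫ v in Ico 1 ((n : ℝ) ^ ((1 : ℝ) / 2)), v ^ (-2 - -(1 / 2) * (2 * θ)) =
      (1 - ((n : ℝ) ^ (1 - θ)) ^ (-(1 / 2) : ℝ)) / (1 - θ) := by
    rw [integral_Ico_rpow zero_lt_one (one_le_rpow hn' (by norm_num)) (by linarith), one_rpow,
      ← rpow_mul hn_pos.le, ← rpow_mul hn_pos.le, ← neg_div_neg_eq]
    ring_nf
  have n_power : (n : ℝ) ^ 2 * (((n : ℝ) ^ ((1 : ℝ) / 4)) ^ (-(2 * θ))) ^ 2 = n ^ (2 - θ) := by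
    simp only [← rpow_natCast, ← rpow_mul hn_pos.le, ← rpow_add hn_pos]
    congr 1
    push_cast
    ring
  rw [setIntegral_A_G_eq_mul hn,
    setIntegral_epigraphOver_rpow measurableSet_Ioo (fun u hu ↦ hu.1) hN (by positivity),
    setIntegral_epigraphOver_rpow measurableSet_Ico (fun v hv ↦ zero_lt_one.trans_le hv.1) hN
      (by positivity), u_integral, v_integral, ← n_power, rpow_neg hθ.le, rpow_neg hθ_sub.le,
    rpow_two, rpow_two]
  field_simp
  ring

end Region

theorem stmt_13 :
    (∃ C : ℝ, 0 < C ∧ ∀ θ : ℝ, 0 < θ → θ < 1 → ∀ n : ℕ, 0 < n →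
      (∫ p in A n, G θ n p) ≤ C * ((n : ℝ) ^ (2 - θ) * θ ^ (-2 : ℝ) * (1 - θ) ^ (-2 : ℝ))) ∧
    (∃ c : ℝ, 0 < c ∧ ∀ θ : ℝ, 0 < θ → θ < 1 → ∀ n : ℕ, 0 < n →
      (8 : ℝ) ≤ (n : ℝ) ^ (1 - θ) →
      c * ((n : ℝ) ^ (2 - θ) * θ ^ (-2 : ℝ) * (1 - θ) ^ (-2 : ℝ)) ≤ ∫ p in A n, G θ n p) := by
  refine ⟨⟨1 / 4, by norm_num, fun θ hθ hθ' n hn ↦ ?_⟩,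
    ⟨1 / 8, by norm_num, fun θ hθ hθ' n hn h8 ↦ ?_⟩⟩
  · have correction_nonneg : 0 ≤ ((n : ℝ) ^ (1 - θ)) ^ (-(1 / 2) : ℝ) :=
      rpow_nonneg (by positivity) _
    rw [setIntegral_A_G hθ hθ' hn]
    refine mul_le_mul_of_nonneg_right ?_
      (mul_nonneg (by positivity) (rpow_nonneg (sub_pos.2 hθ').le _))
    linarith
  · have correction_le_half : ((n : ℝ) ^ (1 - θ)) ^ (-(1 / 2) : ℝ) ≤ 1 / 2 :=
      calc ((n : ℝ) ^ (1 - θ)) ^ (-(1 / 2) : ℝ) ≤ (4 : ℝ) ^ (-(1 / 2) : ℝ) :=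
            rpow_le_rpow_of_nonpos (by norm_num) (by linarith) (by norm_num)
        _ = 1 / 2 := by
            rw [show (4 : ℝ) = 2 ^ (2 : ℝ) by norm_num, ← rpow_mul zero_le_two]
            norm_num
    rw [setIntegral_A_G hθ hθ' hn]
    refine mul_le_mul_of_nonneg_right ?_
      (mul_nonneg (by positivity) (rpow_nonneg (sub_pos.2 hθ').le _))
    linarith
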